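/- Any probability distribution p on {0,1}^n whose support is contained in the union of k pairs of binary vectors each differing in exactly one entry lies in the closure of the set of visible marginal distributions of RBMs with k − 1 hidden units. -/

import Mathlib

open Real

/-- Inner product of a real weight vector with a binary vector regarded as a 0/1 vector. -/
def dotB {n : ℕ} (w : Fin n → ℝ) (v : Fin n → Bool) : ℝ :=
  ∑ i, w i * (if v i then 1 else 0)

/-- The visible marginal of an RBM with `n` visible and `m` hidden units:
`p(v) ∝ exp(B·v) ∏_t (1 + exp(w_t·v + c_t))`. -/
noncomputable def rbmMarginal (n m : ℕ) (B : Fin n → ℝ) (w : Fin m → Fin n → ℝ)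
    (c : Fin m → ℝ) : (Fin n → Bool) → ℝ :=
  fun v => (exp (dotB B v) * ∏ t, (1 + exp (dotB (w t) v + c t))) /
    ∑ v', exp (dotB B v') * ∏ t, (1 + exp (dotB (w t) v' + c t))


lemma rbm_edge_aux {n : ℕ} (a : Fin n → Bool) (i : Fin n) (G : Bool → ℝ) (hG : ∀ s, 0 < G s)
    (δ : ℝ) (hδ : 0 < δ) :
    ∃ (w : Fin n → ℝ) (c : ℝ), ∀ v : Fin n → Bool,
      ((∀ j, j ≠ i → v j = a j) → exp (dotB w v + c) = G (v i)) ∧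
      ((∃ j, j ≠ i ∧ v j ≠ a j) → exp (dotB w v + c) < δ) := by
  have hS : 0 < G true + G false := add_pos (hG _) (hG _)
  obtain ⟨M, hM0, hM⟩ : ∃ M : ℝ, 0 ≤ M ∧ (G true + G false) * exp (-M) < δ := by
    have h := (Real.tendsto_exp_neg_atTop_nhds_zero.const_mul (G true + G false))
    rw [mul_zero] at h
    exact ((Filter.eventually_ge_atTop 0).and (h.eventually (gt_mem_nhds hδ))).exists
  let w' : Fin n → ℝ := fun j => if j = i then 0 else if a j then M else -M
  let w : Fin n → ℝ := fun j => if j = i then log (G true) - log (G false) else w' j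
  have key : ∀ v, dotB w v + (log (G false) - dotB w' a) =
      log (G (v i)) - ∑ j, (if j ≠ i ∧ v j ≠ a j then M else 0) := by
    intro v
    have h1 : dotB w v - dotB w' a = ∑ j, ((if j = i then log (G (v i)) - log (G false) else 0)
        - (if j ≠ i ∧ v j ≠ a j then M else 0)) := by
      unfold dotB
      rw [← Finset.sum_sub_distrib]
      refine Finset.sum_congr rfl fun j _ => ?_
      by_cases hj : j = i
      · subst hj
        cases hv : v j <;> simp [w, w']
      · cases hv : v j <;> cases ha : a j <;> simp [w, w', hj, ha]
    rw [Finset.sum_sub_distrib, Finset.sum_ite_eq' Finset.univ i] at h1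
    simp only [Finset.mem_univ, if_true] at h1
    linarith
  refine ⟨w, log (G false) - dotB w' a, fun v => ⟨fun h => ?_, fun ⟨j, hj, hjv⟩ => ?_⟩⟩
  · rw [key, Finset.sum_eq_zero, sub_zero, exp_log (hG _)]
    intro j _
    rw [if_neg]
    rintro ⟨h1, h2⟩
    exact h2 (h j h1)
  · rw [key]
    have hle : M ≤ ∑ j, (if j ≠ i ∧ v j ≠ a j then M else 0) := by
      have := Finset.single_le_sum (f := fun j => if j ≠ i ∧ v j ≠ a j then M else 0)
        (fun j _ => by split_ifs <;> linarith) (Finset.mem_univ j)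
      simpa [hj, hjv] using this
    calc _ ≤ exp (log (G (v i)) + -M) := exp_le_exp.2 (by linarith)
      _ = G (v i) * exp (-M) := by rw [exp_add, exp_log (hG _)]
      _ ≤ (G true + G false) * exp (-M) := by
        refine mul_le_mul_of_nonneg_right ?_ (exp_pos _).le
        have h1 := hG true
        have h2 := hG false
        cases v i <;> linarith
      _ < δ := hM

lemma rbm_edge {n : ℕ} (a b : Fin n → Bool) (hab : hammingDist a b = 1)
    (g : (Fin n → Bool) → ℝ) (hg : ∀ v, 0 ≤ g v) (hsupp : ∀ v, g v ≠ 0 → v = a ∨ v = b)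
    (δ : ℝ) (hδ : 0 < δ) :
    ∃ (w : Fin n → ℝ) (c : ℝ), ∀ v : Fin n → Bool,
      (g v ≠ 0 → exp (dotB w v + c) = g v) ∧ (g v = 0 → exp (dotB w v + c) < δ) := by
  obtain ⟨i, hi⟩ := Finset.card_eq_one.1 hab
  have hoff : ∀ j, j ≠ i → a j = b j := by
    intro j hj
    by_contra hne
    have : j ∈ ({i} : Finset (Fin n)) := by rw [← hi]; simpa using hne
    exact hj (by simpa using this)
  obtain ⟨w, c, h⟩ := rbm_edge_aux a i
    (fun s => if g (Function.update a i s) = 0 then δ / 2 else g (Function.update a i s))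
    (fun s => by
      split_ifs with h0
      · linarith
      · exact lt_of_le_of_ne (hg _) (Ne.symm h0)) δ hδ
  have hupd : ∀ v : Fin n → Bool, (∀ j, j ≠ i → v j = a j) → Function.update a i (v i) = v := by
    intro v hv
    ext j
    by_cases hj : j = i
    · subst hj; simp
    · simp [hj, hv j hj]
  refine ⟨w, c, fun v => ⟨fun hv => ?_, fun hv => ?_⟩⟩
  · have hva : ∀ j, j ≠ i → v j = a j := by
      intro j hj
      rcases hsupp v hv with rfl | rfl
      · rfl
      · exact (hoff j hj).symm
    rw [(h v).1 hva, hupd v hva, if_neg hv]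
  · by_cases hva : ∀ j, j ≠ i → v j = a j
    · rw [(h v).1 hva, hupd v hva, if_pos hv]
      linarith
    · push Not at hva
      exact (h v).2 hva

open Filter Topology in
/-- Theorem 1 of the paper: any distribution on `{0,1}^n` whose support is contained in
the union of `k` pairs of binary vectors each differing in exactly one entry lies in the
closure of the visible marginals of RBMs with `k - 1` hidden units. -/
theorem rbm_reduced_universal_approximation (n k : ℕ)
    (p : (Fin n → Bool) → ℝ) (hp : ∀ v, 0 ≤ p v) (hsum : ∑ v, p v = 1)
    (E : Finset ((Fin n → Bool) × (Fin n → Bool)))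
    (hEcard : E.card = k)
    (hEedges : ∀ e ∈ E, hammingDist e.1 e.2 = 1)
    (hEcover : ∀ v, p v ≠ 0 → ∃ e ∈ E, v = e.1 ∨ v = e.2) :
    p ∈ closure {q : (Fin n → Bool) → ℝ |
      ∃ (B : Fin n → ℝ) (w : Fin (k - 1) → Fin n → ℝ) (c : Fin (k - 1) → ℝ),
        q = rbmMarginal n (k - 1) B w c} := by
  classical
  obtain _ | m := k
  · exfalso
    have hE : E = ∅ := Finset.card_eq_zero.1 hEcard
    have : ∀ v, p v = 0 := by
      intro v
      by_contra hv
      obtain ⟨e, he, _⟩ := hEcover v hv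
      simp [hE] at he
    simp [this] at hsum
  change p ∈ closure {q : (Fin n → Bool) → ℝ |
      ∃ (B : Fin n → ℝ) (w : Fin m → Fin n → ℝ) (c : Fin m → ℝ), q = rbmMarginal n m B w c}
  let φ : Fin (m + 1) ≃ E := (E.equivFinOfCardEq hEcard).symm
  have hasg : ∀ v, ∃ j : Fin (m + 1), p v ≠ 0 → (v = (φ j).1.1 ∨ v = (φ j).1.2) := by
    intro v
    by_cases hv : p v = 0
    · exact ⟨0, fun h => absurd hv h⟩
    · obtain ⟨e, he, hev⟩ := hEcover v hv
      refine ⟨φ.symm ⟨e, he⟩, fun _ => ?_⟩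
      simpa using hev
  choose asg hasg using hasg
  let δ : ℕ → ℝ := fun N => 1 / ((N : ℝ) + 1)
  have hδ : ∀ N, 0 < δ N := fun N => Nat.one_div_pos_of_nat
  have hδt : Tendsto δ atTop (𝓝 0) := tendsto_one_div_add_atTop_nhds_zero_nat
  have hbase : ∀ N, ∃ (B : Fin n → ℝ) (b : ℝ), ∀ v,
      ((if asg v = 0 then p v else 0) ≠ 0 → exp (dotB B v + b) = (if asg v = 0 then p v else 0)) ∧
      ((if asg v = 0 then p v else 0) = 0 → exp (dotB B v + b) < δ N) := by
    intro N
    refine rbm_edge (φ 0).1.1 (φ 0).1.2 (hEedges _ (φ 0).2) (fun v => if asg v = 0 then p v else 0)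
      ?_ ?_ (δ N) (hδ N)
    · intro v
      split_ifs
      · exact hp v
      · exact le_rfl
    · intro v hv
      simp only [ne_eq, ite_eq_right_iff, Classical.not_imp] at hv
      have := hasg v hv.2
      rwa [hv.1] at this
  choose B b hB using hbase
  have hhid : ∀ N (t : Fin m), ∃ (w : Fin n → ℝ) (c : ℝ), ∀ v,
      ((if asg v = t.succ then p v / exp (dotB (B N) v + b N) else 0) ≠ 0 →
        exp (dotB w v + c) = (if asg v = t.succ then p v / exp (dotB (B N) v + b N) else 0)) ∧
      ((if asg v = t.succ then p v / exp (dotB (B N) v + b N) else 0) = 0 →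
        exp (dotB w v + c) < δ N) := by
    intro N t
    refine rbm_edge (φ t.succ).1.1 (φ t.succ).1.2 (hEedges _ (φ t.succ).2)
      (fun v => if asg v = t.succ then p v / exp (dotB (B N) v + b N) else 0)
      ?_ ?_ (δ N) (hδ N)
    · intro v
      split_ifs
      · exact div_nonneg (hp v) (exp_pos _).le
      · exact le_rfl
    · intro v hv
      simp only [ne_eq, ite_eq_right_iff, Classical.not_imp] at hv
      have := hasg v (fun h0 => hv.2 (by rw [h0, zero_div]))
      rwa [hv.1] at this
  choose w c hw using hhid
  let F : ℕ → (Fin n → Bool) → ℝ := fun N v =>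
    exp (dotB (B N) v + b N) * ∏ t, (1 + exp (dotB (w N t) v + c N t))
  have hh : ∀ v, Tendsto (fun N => exp (dotB (B N) v + b N)) atTop
      (𝓝 (if asg v = 0 then p v else 0)) := by
    intro v
    by_cases h0 : (if asg v = 0 then p v else 0) = 0
    · rw [h0]
      exact squeeze_zero (fun N => (exp_pos _).le) (fun N => ((hB N v).2 h0).le) hδt
    · exact tendsto_const_nhds.congr fun N => ((hB N v).1 h0).symm
  have hu : ∀ v (t : Fin m), (asg v ≠ t.succ ∨ p v = 0) →
      Tendsto (fun N => 1 + exp (dotB (w N t) v + c N t)) atTop (𝓝 1) := by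
    intro v t hvt
    have : Tendsto (fun N => exp (dotB (w N t) v + c N t)) atTop (𝓝 0) := by
      refine squeeze_zero (fun N => (exp_pos _).le) (fun N => ((hw N t v).2 ?_).le) hδt
      rcases hvt with h | h <;> simp [h]
    simpa using this.const_add 1
  have hF : ∀ v, Tendsto (fun N => F N v) atTop (𝓝 (p v)) := by
    intro v
    by_cases hv : p v = 0 ∨ asg v = 0
    · have h1 := hh v
      have h2 : (if asg v = 0 then p v else 0) = p v := by
        rcases hv with h | h <;> simp [h]
      rw [h2] at h1
      have h3 : Tendsto (fun N => ∏ t, (1 + exp (dotB (w N t) v + c N t))) atTop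
          (𝓝 (∏ t : Fin m, (1 : ℝ))) := by
        refine tendsto_finsetProd _ fun t _ => hu v t ?_
        rcases hv with h | h
        · exact Or.inr h
        · left; rw [h]; exact (Fin.succ_ne_zero t).symm
      simpa using h1.mul h3
    · push Not at hv
      obtain ⟨s, hs⟩ := Fin.exists_succ_eq.2 hv.2
      have h1 := hh v
      rw [if_neg hv.2] at h1
      have h3 : Tendsto (fun N => ∏ t ∈ Finset.univ.erase s, (1 + exp (dotB (w N t) v + c N t)))
          atTop (𝓝 (∏ t ∈ Finset.univ.erase s, (1 : ℝ))) := by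
        refine tendsto_finsetProd _ fun t ht => hu v t (Or.inl ?_)
        rw [← hs]
        intro h
        exact (Finset.ne_of_mem_erase ht) (Fin.succ_injective _ h).symm
      have h4 := (h1.add_const (p v)).mul h3
      simp only [Finset.prod_const_one, mul_one, zero_add] at h4
      refine h4.congr fun N => ?_
      have h5 : exp (dotB (w N s) v + c N s) = p v / exp (dotB (B N) v + b N) := by
        have := (hw N s v).1
        rw [if_pos hs.symm] at this
        exact this (div_ne_zero hv.1 (exp_ne_zero _))
      simp only [F]
      rw [← Finset.mul_prod_erase Finset.univ _ (Finset.mem_univ s), h5, ← mul_assoc]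
      congr 1
      have := exp_ne_zero (dotB (B N) v + b N)
      field_simp
  have hlim : Tendsto (fun N v => F N v / ∑ v', F N v') atTop (𝓝 p) := by
    rw [tendsto_pi_nhds]
    intro v
    have hs : Tendsto (fun N => ∑ v', F N v') atTop (𝓝 (∑ v', p v')) :=
      tendsto_finsetSum _ fun v' _ => hF v'
    rw [hsum] at hs
    have h := (hF v).div hs one_ne_zero
    rw [div_one] at h
    exact h
  refine mem_closure_of_tendsto hlim (Eventually.of_forall fun N => ⟨B N, w N, c N, ?_⟩)
  funext v
  simp only [F, rbmMarginal, exp_add (dotB (B N) _) (b N)]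
  have hsumeq : ∑ v', exp (dotB (B N) v') * exp (b N) *
      ∏ t, (1 + exp (dotB (w N t) v' + c N t)) = exp (b N) * ∑ v', exp (dotB (B N) v') *
      ∏ t, (1 + exp (dotB (w N t) v' + c N t)) := by
    rw [Finset.mul_sum]
    exact Finset.sum_congr rfl fun v' _ => by ring
  rw [hsumeq, mul_comm (exp (dotB (B N) v)), mul_assoc,
    mul_div_mul_left _ _ (exp_ne_zero _)]
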